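/- Let (X,≤) be a well quasi-ordered set and let X^⊛ be the set of finite multisets over X, quasi-ordered by ≤⊛. The ideals of (X^⊛, ≤⊛) (equivalently, the irreducible closed subsets of X^⊛ with the Alexandroff topology of ≤⊛) are exactly the denotations of ⊛-products over X. -/

import Mathlib

/-- An ideal of a quasi-ordered set: nonempty, downward closed, and directed. -/
def IsIdeal {X : Type*} [Preorder X] (S : Set X) : Prop :=
  S.Nonempty ∧ IsLowerSet S ∧ DirectedOn (· ≤ ·) S

/-- A quasi-ordering is a well quasi-ordering iff every infinite sequence contains an
infinite ascending subsequence. -/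
def IsWqo (X : Type*) [Preorder X] : Prop :=
  ∀ f : ℕ → X, ∃ g : ℕ → ℕ, StrictMono g ∧ ∀ m n : ℕ, m ≤ n → f (g m) ≤ f (g n)

/-- The quasi-ordering `≤⊛` on finite multisets: `⦃x₁,…,x_m⦄ ≤⊛ ⦃y₁,…,y_n⦄` iff there is an
injection `r` with `xᵢ ≤ y_{r(i)}` for all `i`, i.e. some sub-multiset of the right-hand
side is related pointwise to the left-hand side. -/
def MSLE {X : Type*} [Preorder X] (m m' : Multiset X) : Prop :=
  ∃ t ≤ m', Multiset.Rel (· ≤ ·) m t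

/-- `A ⊙ B = {m ⊎ m' | m ∈ A, m' ∈ B}`. -/
def odot {X : Type*} (A B : Set (Multiset X)) : Set (Multiset X) :=
  {m | ∃ a ∈ A, ∃ b ∈ B, m = a + b}

/-- `(⋃ A)^⊛`: the multisets all of whose elements lie in some member of `A`. -/
def starDen {X : Type*} (A : Finset (Set X)) : Set (Multiset X) :=
  {m | ∀ x ∈ m, ∃ C ∈ A, x ∈ C}

/-- `C^?`: the empty multiset together with the singletons `⦃x⦄`, `x ∈ C`. -/
def optDen {X : Type*} (C : Set X) : Set (Multiset X) :=
  {0} ∪ {m | ∃ x ∈ C, m = {x}}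

/-- Denotation of the ⊛-product `A^⊛ ⊙ C₁^? ⊙ … ⊙ Cₙ^?`. -/
def msProdDen {X : Type*} (A : Finset (Set X)) (Cs : List (Set X)) : Set (Multiset X) :=
  (Cs.map optDen).foldl odot (starDen A)

/- An ideal `S` of `X^⊛` splits as `Y^⊛ ⊙ R`. Here `Y` is the set of elements `x` all of whose
powers `⦃x,…,x⦄` lie in `S`: a large enough power of `x`, compared with an upper bound of it and
`m ∈ S`, leaves room for one more copy of `x` above `m`, so `S` is closed under adding elements of
`Y`. The multisets of `S` avoiding `Y` have bounded size, since the complement of `Y` is generated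
by finitely many elements and each of them has a power outside `S`; `R` is their downward closure.
If `k` is the maximal size in `R`, then every member of `R` lies below a `k`-tuple, and the
`k`-tuples in `R` form a finite union of ideals of `X^k`, one of which is cofinal in `R` because
`R` is directed. Ideals of `X^k` are products `C₁ × ⋯ × Cₖ` of ideals, so `R = C₁^? ⊙ ⋯ ⊙ Cₖ^?`. -/

section Ideals

theorem exists_subset_of_subset_iUnion_of_directedOn {α ι : Type*} [Finite ι]
    {r : α → α → Prop} [IsTrans α r] {S : Set α} (hne : S.Nonempty) (hdir : DirectedOn r S)
    {T : ι → Set α} (hT : ∀ i a b, r a b → b ∈ T i → a ∈ T i) (hS : S ⊆ ⋃ i, T i) :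
    ∃ i, S ⊆ T i := by
  by_contra! hcon
  choose a haS haT using fun i => Set.not_subset.1 (hcon i)
  have : Nonempty S := hne.to_subtype
  obtain ⟨⟨w, hw⟩, haw⟩ :=
    (directedOn_iff_directed.1 hdir).finite_le fun i => (⟨a i, haS i⟩ : S)
  obtain ⟨i, hi⟩ := Set.mem_iUnion.1 (hS hw)
  exact haT i (hT i _ _ (haw i) hi)

variable {X : Type*} [Preorder X]

theorem IsWqo.wellQuasiOrderedLE (hX : IsWqo X) : WellQuasiOrderedLE X where
  wqo f := by
    obtain ⟨g, hg, hfg⟩ := hX f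
    exact ⟨g 0, g 1, hg Nat.zero_lt_one, hfg 0 1 (Nat.zero_le 1)⟩

theorem exists_finset_forall_exists_le [WellQuasiOrderedLE X] (P : Set X) :
    ∃ F : Finset X, ↑F ⊆ P ∧ ∀ x ∈ P, ∃ b ∈ F, b ≤ x := by
  by_contra! hcon
  obtain ⟨f, -, hf⟩ := exists_seq_of_forall_finset_exists (· ∈ P) (fun a b => ¬ a ≤ b) hcon
  obtain ⟨m, n, hmn, hle⟩ := wellQuasiOrdered_le f
  exact hf m n hmn hle

theorem wellFoundedLT_lowerSet [WellQuasiOrderedLE X] : WellFoundedLT (LowerSet X) := by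
  rw [WellFoundedLT, isWellFounded_iff, RelEmbedding.wellFounded_iff_isEmpty]
  refine ⟨fun D => ?_⟩
  have hD : StrictAnti D := fun m n hmn => D.map_rel_iff.2 hmn
  have hdiff (n : ℕ) : ∃ x ∈ D n, x ∉ D (n + 1) :=
    Set.exists_of_ssubset (LowerSet.coe_ssubset_coe.2 (hD n.lt_succ_self))
  choose x hx hx' using hdiff
  obtain ⟨m, n, hmn, hle⟩ := wellQuasiOrdered_le x
  exact hx' m ((D (m + 1)).lower hle (hD.antitone hmn (hx n)))

theorem isIdeal_of_supIrred {D : LowerSet X} (hD : SupIrred D) : IsIdeal (D : Set X) := by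
  refine ⟨?_, D.lower, fun x hx y hy => ?_⟩
  · rw [LowerSet.coe_nonempty]
    exact hD.ne_bot
  · by_contra! hxy
    have hsup : D.erase x ⊔ D.erase y = D := by
      ext z
      simp only [LowerSet.coe_sup, LowerSet.coe_erase, UpperSet.coe_Ici, Set.mem_union,
        Set.mem_sdiff, Set.mem_Ici, SetLike.mem_coe]
      have := hxy z
      tauto
    rcases hD.2 hsup with h | h
    exacts [LowerSet.erase_eq.1 h hx, LowerSet.erase_eq.1 h hy]

theorem exists_finset_isIdeal_mem_iff [WellQuasiOrderedLE X] (D : LowerSet X) :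
    ∃ A : Finset (Set X), (∀ C ∈ A, IsIdeal C) ∧ ∀ x, x ∈ D ↔ ∃ C ∈ A, x ∈ C := by
  have := wellFoundedLT_lowerSet (X := X)
  obtain ⟨s, rfl, hs⟩ := exists_supIrred_decomposition D
  refine ⟨s.map ⟨SetLike.coe, SetLike.coe_injective⟩, ?_, fun x => ?_⟩
  · simpa using fun C hC => isIdeal_of_supIrred (hs hC)
  · simp [Finset.sup_id_eq_sSup]

variable {ι : Type*} {α : ι → Type*} [∀ i, Preorder (α i)] {I : Set (∀ i, α i)}

theorem IsIdeal.eval_image (hI : IsIdeal I) (i : ι) : IsIdeal (Function.eval i '' I) := by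
  classical
  obtain ⟨hne, hlow, hdir⟩ := hI
  refine ⟨hne.image _, ?_, ?_⟩
  · rintro _ b hb ⟨f, hf, rfl⟩
    exact ⟨Function.update f i b, hlow (update_le_self_iff.2 hb) hf, by simp⟩
  · rintro _ ⟨f, hf, rfl⟩ _ ⟨g, hg, rfl⟩
    obtain ⟨h, hh, hfh, hgh⟩ := hdir f hf g hg
    exact ⟨h i, ⟨h, hh, rfl⟩, hfh i, hgh i⟩

theorem IsIdeal.mem_iff_forall_eval_mem [Finite ι] (hI : IsIdeal I) {f : ∀ i, α i} :
    f ∈ I ↔ ∀ i, f i ∈ Function.eval i '' I := by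
  refine ⟨fun hf i => ⟨f, hf, rfl⟩, fun hf => ?_⟩
  obtain ⟨hne, hlow, hdir⟩ := hI
  choose g hgI hgf using hf
  have : Nonempty I := hne.to_subtype
  obtain ⟨⟨h, hh⟩, hgh⟩ :=
    (directedOn_iff_directed.1 hdir).finite_le fun i => (⟨g i, hgI i⟩ : I)
  exact hlow (fun i => hgf i ▸ hgh i i) hh

end Ideals

namespace MSLE

variable {X : Type*} [Preorder X] {a b c d u v : Multiset X}

theorem of_le (h : a ≤ b) : MSLE a b :=
  ⟨a, h, Multiset.rel_refl_of_refl_on fun _ _ => le_rfl⟩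

theorem refl (a : Multiset X) : MSLE a a :=
  of_le le_rfl

theorem trans (hab : MSLE a b) (hbc : MSLE b c) : MSLE a c := by
  obtain ⟨s, hsb, has⟩ := hab
  obtain ⟨t, htc, hbt⟩ := hbc
  obtain ⟨r, rfl⟩ := Multiset.le_iff_exists_add.1 hsb
  obtain ⟨t₀, t₁, hst, -, rfl⟩ := Multiset.rel_add_left.1 hbt
  exact ⟨t₀, (Multiset.le_add_right t₀ t₁).trans htc, has.trans _ hst⟩

instance : IsTrans (Multiset X) MSLE where
  trans _ _ _ := MSLE.trans

theorem card_le (h : MSLE a b) : a.card ≤ b.card := by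
  obtain ⟨t, htb, hat⟩ := h
  exact (Multiset.card_eq_card_of_rel hat).trans_le (Multiset.card_le_card htb)

theorem add (hab : MSLE a b) (hcd : MSLE c d) : MSLE (a + c) (b + d) := by
  obtain ⟨s, hsb, has⟩ := hab
  obtain ⟨t, htd, hct⟩ := hcd
  exact ⟨s + t, add_le_add hsb htd, has.add hct⟩

theorem exists_add_of_add (h : MSLE u (a + b)) :
    ∃ u₁ u₂, u = u₁ + u₂ ∧ MSLE u₁ a ∧ MSLE u₂ b := by
  classical
  obtain ⟨t, ht, hut⟩ := h
  rw [← Multiset.sub_add_inter t a, add_comm] at hut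
  obtain ⟨u₁, u₂, h₁, h₂, rfl⟩ := Multiset.rel_add_right.1 hut
  exact ⟨u₁, u₂, rfl, ⟨t ∩ a, Multiset.inter_le_right, h₁⟩,
    ⟨t - a, tsub_le_iff_left.2 ht, h₂⟩⟩

theorem sum {ι : Type*} [Fintype ι] {f g : ι → Multiset X} (h : ∀ i, MSLE (f i) (g i)) :
    MSLE (∑ i, f i) (∑ i, g i) :=
  Finset.sum_hom_rel (refl 0) fun i _ _ hs => (h i).add hs

theorem filter_right {p : X → Prop} [DecidablePred p] (hp : ∀ x y, x ≤ y → p x → p y)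
    (h : MSLE u v) (hu : ∀ x ∈ u, p x) : MSLE u (v.filter p) := by
  obtain ⟨t, htv, hut⟩ := h
  refine ⟨t, Multiset.le_filter.2 ⟨htv, fun y hy => ?_⟩, hut⟩
  obtain ⟨x, hx, hxy⟩ := Multiset.exists_mem_of_rel_of_mem (Multiset.rel_flip.2 hut) hy
  exact hp x y hxy (hu x hx)

theorem map_left {f : X → X} (hf : ∀ x ∈ u, f x ≤ x) : MSLE (u.map f) u :=
  ⟨u, le_rfl, Multiset.rel_map_left.2 (Multiset.rel_refl_of_refl_on hf)⟩

theorem replicate {x y : X} (h : x ≤ y) (n : ℕ) :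
    MSLE (Multiset.replicate n x) (Multiset.replicate n y) :=
  ⟨_, le_rfl, Multiset.rel_replicate_left.2
    ⟨Multiset.card_replicate n y, fun _ hz => h.trans_eq (Multiset.eq_of_mem_replicate hz).symm⟩⟩

theorem singleton {x y : X} (h : x ≤ y) : MSLE {x} {y} :=
  replicate h 1

theorem eq_zero_or_singleton {x : X} (h : MSLE u {x}) : u = 0 ∨ ∃ y ≤ x, u = {y} := by
  obtain ⟨t, ht, hut⟩ := h
  rcases Multiset.le_singleton.1 ht with rfl | rfl
  · exact .inl (Multiset.rel_zero_right.1 hut)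
  · obtain ⟨y, s, hyx, hs, rfl⟩ := Multiset.rel_cons_right.1 hut
    exact .inr ⟨y, hyx, by rw [Multiset.rel_zero_right.1 hs]; rfl⟩

theorem cons_of_replicate {x : X} {n : ℕ} (hu : MSLE u v) (hx : MSLE (Multiset.replicate n x) v)
    (hn : u.card < n) : MSLE (x ::ₘ u) v := by
  classical
  obtain ⟨s, hsv, hus⟩ := hu
  obtain ⟨t, htv, hxt⟩ := hx
  obtain ⟨htn, hxt⟩ := Multiset.rel_replicate_left.1 hxt
  have hts : ¬ t ≤ s := fun hle => by
    have := Multiset.card_le_card hle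
    rw [Multiset.card_eq_card_of_rel hus] at hn
    omega
  obtain ⟨y, hy⟩ := Multiset.exists_mem_of_ne_zero (mt tsub_eq_zero_iff_le.1 hts)
  refine ⟨y ::ₘ s, ?_, .cons (hxt y (Multiset.mem_of_le (Multiset.sub_le_self t s) hy)) hus⟩
  calc y ::ₘ s = {y} + s := (Multiset.singleton_add y s).symm
    _ ≤ (v - s) + s := by
        gcongr
        exact (Multiset.singleton_le.2 hy).trans (tsub_le_tsub_right htv s)
    _ = v := tsub_add_cancel_of_le hsv

end MSLE

/-- The ideals of `X^⊛` with respect to `≤⊛`. The predicate `IsIdeal` does not apply, because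
Mathlib orders `Multiset X` by inclusion. -/
structure IsMultisetIdeal {X : Type*} [Preorder X] (S : Set (Multiset X)) : Prop where
  nonempty : S.Nonempty
  mem_of_msle : ∀ u v : Multiset X, MSLE u v → v ∈ S → u ∈ S
  directed : DirectedOn MSLE S

section Products

open scoped Pointwise

variable {X : Type*}

theorem foldl_odot (S : Set (Multiset X)) (L : List (Set (Multiset X))) :
    L.foldl odot S = S + L.sum := by
  induction L generalizing S with
  | nil => simp
  | cons T L ih =>
    have hodot : odot S T = S + T := by
      ext m
      simp only [odot, Set.mem_ofPred_eq, Set.mem_add, eq_comm]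
    rw [List.foldl_cons, ih, hodot, List.sum_cons, add_assoc]

theorem msProdDen_eq_add_sum (A : Finset (Set X)) (Cs : List (Set X)) :
    msProdDen A Cs = starDen A + (Cs.map optDen).sum :=
  foldl_odot _ _

variable [Preorder X]

theorem isMultisetIdeal_zero : IsMultisetIdeal (0 : Set (Multiset X)) where
  nonempty := Set.zero_nonempty
  mem_of_msle := by
    rintro u _ h rfl
    exact Multiset.card_eq_zero.1 (Nat.le_zero.1 h.card_le)
  directed := by
    rintro _ rfl _ rfl
    exact ⟨0, rfl, .refl 0, .refl 0⟩

theorem IsMultisetIdeal.add {S T : Set (Multiset X)} (hS : IsMultisetIdeal S)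
    (hT : IsMultisetIdeal T) : IsMultisetIdeal (S + T) where
  nonempty := hS.nonempty.add hT.nonempty
  mem_of_msle := by
    rintro u _ h ⟨a, ha, b, hb, rfl⟩
    obtain ⟨u₁, u₂, rfl, h₁, h₂⟩ := h.exists_add_of_add
    exact Set.add_mem_add (hS.mem_of_msle _ _ h₁ ha) (hT.mem_of_msle _ _ h₂ hb)
  directed := by
    rintro _ ⟨a, ha, b, hb, rfl⟩ _ ⟨a', ha', b', hb', rfl⟩
    obtain ⟨c, hc, hac, hac'⟩ := hS.directed a ha a' ha'
    obtain ⟨d, hd, hbd, hbd'⟩ := hT.directed b hb b' hb'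
    exact ⟨c + d, Set.add_mem_add hc hd, hac.add hbd, hac'.add hbd'⟩

theorem isMultisetIdeal_starDen {A : Finset (Set X)} (hA : ∀ C ∈ A, IsLowerSet C) :
    IsMultisetIdeal (starDen A) where
  nonempty := ⟨0, by simp [starDen]⟩
  mem_of_msle := by
    rintro u v ⟨t, htv, hut⟩ hv x hx
    obtain ⟨y, hy, hxy⟩ := Multiset.exists_mem_of_rel_of_mem hut hx
    obtain ⟨C, hC, hyC⟩ := hv y (Multiset.mem_of_le htv hy)
    exact ⟨C, hC, hA C hC hxy hyC⟩
  directed u hu v hv :=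
    ⟨u + v, fun x hx => (Multiset.mem_add.1 hx).elim (hu x) (hv x),
      .of_le (Multiset.le_add_right u v), .of_le (Multiset.le_add_left v u)⟩

theorem IsIdeal.mem_optDen_iff {C : Set X} (hC : IsIdeal C) {m : Multiset X} :
    m ∈ optDen C ↔ ∃ x ∈ C, MSLE m {x} := by
  constructor
  · rintro (rfl | ⟨x, hx, rfl⟩)
    · obtain ⟨x, hx⟩ := hC.1
      exact ⟨x, hx, .of_le (Multiset.zero_le _)⟩
    · exact ⟨x, hx, .refl _⟩
  · rintro ⟨x, hx, h⟩
    exact h.eq_zero_or_singleton.imp id fun ⟨y, hyx, hm⟩ => ⟨y, hC.2.1 hyx hx, hm⟩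

theorem IsIdeal.isMultisetIdeal_optDen {C : Set X} (hC : IsIdeal C) :
    IsMultisetIdeal (optDen C) where
  nonempty := ⟨0, .inl rfl⟩
  mem_of_msle u v h hv := by
    rw [hC.mem_optDen_iff] at hv ⊢
    exact hv.imp fun x hx => ⟨hx.1, h.trans hx.2⟩
  directed u hu v hv := by
    obtain ⟨x, hx, hux⟩ := hC.mem_optDen_iff.1 hu
    obtain ⟨y, hy, hvy⟩ := hC.mem_optDen_iff.1 hv
    obtain ⟨z, hz, hxz, hyz⟩ := hC.2.2 x hx y hy
    exact ⟨{z}, .inr ⟨z, hz, rfl⟩, hux.trans (.singleton hxz), hvy.trans (.singleton hyz)⟩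

theorem isMultisetIdeal_msProdDen {A : Finset (Set X)} {Cs : List (Set X)}
    (hA : ∀ C ∈ A, IsIdeal C) (hCs : ∀ C ∈ Cs, IsIdeal C) : IsMultisetIdeal (msProdDen A Cs) := by
  rw [msProdDen_eq_add_sum]
  refine (isMultisetIdeal_starDen fun C hC => (hA C hC).2.1).add ?_
  refine List.sum_induction _ (fun _ _ => .add) isMultisetIdeal_zero ?_
  simpa using fun C hC => (hCs C hC).isMultisetIdeal_optDen

theorem mem_sum_optDen_iff {ι : Type*} [Fintype ι] {C : ι → Set X} (hC : ∀ i, IsIdeal (C i))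
    {m : Multiset X} :
    m ∈ ∑ i, optDen (C i) ↔ ∃ f : ι → X, (∀ i, f i ∈ C i) ∧ MSLE m (∑ i, {f i}) := by
  constructor
  · intro hm
    obtain ⟨g, hg, rfl⟩ := (Set.mem_fintype_sum _ _).1 hm
    choose f hf hgf using fun i => (hC i).mem_optDen_iff.1 (hg i)
    exact ⟨f, hf, .sum hgf⟩
  · rintro ⟨f, hf, hm⟩
    have hideal : IsMultisetIdeal (∑ i, optDen (C i)) :=
      Finset.sum_induction _ _ (fun _ _ => .add) isMultisetIdeal_zero
        fun i _ => (hC i).isMultisetIdeal_optDen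
    exact hideal.mem_of_msle _ _ hm
      ((Set.mem_fintype_sum _ _).2 ⟨fun i => {f i}, fun i => .inr ⟨f i, hf i, rfl⟩, rfl⟩)

end Products

section Bounded

open scoped Pointwise

variable {X : Type*}

theorem exists_sum_singleton_eq_of_card_eq {m : Multiset X} {k : ℕ} (hm : m.card = k) :
    ∃ f : Fin k → X, ∑ i, {f i} = m := by
  subst hm
  induction m using Quotient.inductionOn with
  | h l =>
    refine ⟨l.get, ?_⟩
    change Multiset.sum (Multiset.map (fun i => {l.get i}) Finset.univ.val) = (l : Multiset X)
    rw [← Function.comp_def, ← Multiset.map_map, Multiset.sum_map_singleton, Fin.univ_val_map,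
      List.ofFn_get]

variable [Preorder X]

theorem IsMultisetIdeal.exists_isIdeal_mem_iff [WellQuasiOrderedLE X] {R : Set (Multiset X)}
    (hR : IsMultisetIdeal R) (hbdd : BddAbove (Multiset.card '' R)) :
    ∃ (k : ℕ) (I : Set (Fin k → X)), IsIdeal I ∧ ∀ m, m ∈ R ↔ ∃ f ∈ I, MSLE m (∑ i, {f i}) := by
  obtain ⟨r, hr, hmax⟩ : ∃ r ∈ R, ∀ m ∈ R, m.card ≤ r.card := by
    obtain ⟨r, hr, hcard⟩ := Nat.sSup_mem (hR.nonempty.image _) hbdd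
    exact ⟨r, hr, fun m hm => hcard ▸ le_csSup hbdd ⟨m, hm, rfl⟩⟩
  let D : LowerSet (Fin r.card → X) :=
    ⟨{f | ∑ i, {f i} ∈ R}, fun _ _ hgf => hR.mem_of_msle _ _ (.sum fun i => .singleton (hgf i))⟩
  obtain ⟨A, hA, hDA⟩ := exists_finset_isIdeal_mem_iff D
  let T (I : A) : Set (Multiset X) := {m | ∃ f ∈ I.1, MSLE m (∑ i, {f i})}
  have hcover : R ⊆ ⋃ I, T I := fun m hm => by
    obtain ⟨w, hw, hmw, hrw⟩ := hR.directed m hm r hr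
    obtain ⟨f, rfl⟩ := exists_sum_singleton_eq_of_card_eq ((hmax w hw).antisymm hrw.card_le)
    obtain ⟨I, hI, hf⟩ := (hDA f).1 hw
    exact Set.mem_iUnion.2 ⟨⟨I, hI⟩, f, hf, hmw⟩
  obtain ⟨⟨I, hI⟩, hRI⟩ := exists_subset_of_subset_iUnion_of_directedOn hR.nonempty hR.directed
    (T := T) (fun _ _ _ hab ⟨f, hf, hb⟩ => ⟨f, hf, hab.trans hb⟩) hcover
  refine ⟨_, I, hA I hI, fun m => ⟨fun hm => hRI hm, ?_⟩⟩
  rintro ⟨f, hf, hm⟩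
  exact hR.mem_of_msle _ _ hm ((hDA f).2 ⟨I, hI, hf⟩)

theorem IsMultisetIdeal.exists_eq_sum_optDen [WellQuasiOrderedLE X] {R : Set (Multiset X)}
    (hR : IsMultisetIdeal R) (hbdd : BddAbove (Multiset.card '' R)) :
    ∃ (k : ℕ) (C : Fin k → Set X), (∀ i, IsIdeal (C i)) ∧ R = ∑ i, optDen (C i) := by
  obtain ⟨k, I, hI, hRI⟩ := hR.exists_isIdeal_mem_iff hbdd
  refine ⟨k, fun i => Function.eval i '' I, hI.eval_image, Set.ext fun m => ?_⟩
  simp only [hRI, mem_sum_optDen_iff hI.eval_image, hI.mem_iff_forall_eval_mem]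

end Bounded

/-- The elements all of whose powers lie in `S`; for an ideal `S` they form the starred part of
the ⊛-product denoting `S`. -/
def starPart {X : Type*} (S : Set (Multiset X)) : Set X :=
  {x | ∀ n, Multiset.replicate n x ∈ S}

/-- The downward closure of the members of `S` avoiding `starPart S`; for an ideal `S` it is the
denotation of the factors `C₁^? ⊙ … ⊙ Cₙ^?` of the ⊛-product denoting `S`. -/
def residualPart {X : Type*} [Preorder X] (S : Set (Multiset X)) : Set (Multiset X) :=
  {u | ∃ m ∈ S, (∀ x ∈ m, x ∉ starPart S) ∧ MSLE u m}

namespace IsMultisetIdeal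

open scoped Pointwise

variable {X : Type*} [Preorder X] {S : Set (Multiset X)}

theorem isLowerSet_starPart (hS : IsMultisetIdeal S) : IsLowerSet (starPart S) :=
  fun _ _ hyx hx n => hS.mem_of_msle _ _ (.replicate hyx n) (hx n)

theorem add_mem (hS : IsMultisetIdeal S) {s m : Multiset X} (hs : ∀ x ∈ s, x ∈ starPart S)
    (hm : m ∈ S) : s + m ∈ S := by
  induction s using Multiset.induction_on with
  | empty => rwa [zero_add]
  | cons x s ih =>
    rw [Multiset.forall_mem_cons] at hs
    obtain ⟨w, hw, hmw, hxw⟩ := hS.directed _ (ih hs.2) _ (hs.1 ((s + m).card + 1))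
    rw [Multiset.cons_add]
    exact hS.mem_of_msle _ _ (hmw.cons_of_replicate hxw (Nat.lt_succ_self _)) hw

theorem residualPart_subset (hS : IsMultisetIdeal S) : residualPart S ⊆ S :=
  fun _ ⟨m, hm, _, hum⟩ => hS.mem_of_msle _ m hum hm

theorem eq_add_residualPart (hS : IsMultisetIdeal S) :
    S = {s | ∀ x ∈ s, x ∈ starPart S} + residualPart S := by
  classical
  refine Set.Subset.antisymm (fun m hm => ?_) ?_
  · rw [← Multiset.filter_add_not (· ∈ starPart S) m]
    refine Set.add_mem_add (fun x hx => Multiset.of_mem_filter hx)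
      ⟨m.filter (· ∉ starPart S), ?_, fun x hx => (Multiset.mem_filter.1 hx).2, .refl _⟩
    exact hS.mem_of_msle _ m (.of_le (Multiset.filter_le _ m)) hm
  · rintro _ ⟨s, hs, u, hu, rfl⟩
    exact hS.add_mem hs (hS.residualPart_subset hu)

theorem isMultisetIdeal_residualPart (hS : IsMultisetIdeal S) :
    IsMultisetIdeal (residualPart S) where
  nonempty := by
    obtain ⟨m, hm⟩ := hS.nonempty
    exact ⟨0, 0, hS.mem_of_msle _ m (.of_le (Multiset.zero_le m)) hm, by simp, .refl 0⟩
  mem_of_msle := fun _ _ huv ⟨m, hm, hmY, hvm⟩ => ⟨m, hm, hmY, huv.trans hvm⟩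
  directed := by
    classical
    rintro u ⟨m, hm, hmY, hum⟩ v ⟨n, hn, hnY, hvn⟩
    obtain ⟨w, hw, hmw, hnw⟩ := hS.directed m hm n hn
    have hupper : ∀ x y, x ≤ y → x ∉ starPart S → y ∉ starPart S :=
      fun x y hxy hx hy => hx (hS.isLowerSet_starPart hxy hy)
    have hw' : w.filter (· ∉ starPart S) ∈ S :=
      hS.mem_of_msle _ w (.of_le (Multiset.filter_le _ w)) hw
    exact ⟨_, ⟨_, hw', fun x hx => (Multiset.mem_filter.1 hx).2, .refl _⟩,
      hum.trans (hmw.filter_right hupper hmY), hvn.trans (hnw.filter_right hupper hnY)⟩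

theorem bddAbove_card_residualPart [WellQuasiOrderedLE X] (hS : IsMultisetIdeal S) :
    BddAbove (Multiset.card '' residualPart S) := by
  classical
  obtain ⟨F, hF, hbasis⟩ := exists_finset_forall_exists_le (starPart S)ᶜ
  have hpow : ∀ b ∈ F, ∃ n, Multiset.replicate n b ∉ S := fun b hb => not_forall.1 (hF hb)
  choose! n hn using hpow
  choose! φ hφF hφ using hbasis
  refine ⟨∑ b ∈ F, n b, ?_⟩
  rintro _ ⟨u, ⟨m, hm, hmY, hum⟩, rfl⟩
  have hφm : m.map φ ∈ S := hS.mem_of_msle _ m (.map_left fun x hx => hφ x (hmY x hx)) hm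
  have hcount : ∀ b ∈ F, (m.map φ).count b ≤ n b := fun b hb => by
    by_contra! hlt
    exact hn b hb (hS.mem_of_msle _ _
      (.of_le (Multiset.le_count_iff_replicate_le.1 hlt.le)) hφm)
  calc u.card ≤ m.card := hum.card_le
    _ = (m.map φ).card := (Multiset.card_map φ m).symm
    _ = ∑ b ∈ F, (m.map φ).count b := by
        refine (Multiset.sum_count_eq_card fun b hb => ?_).symm
        obtain ⟨x, hx, rfl⟩ := Multiset.mem_map.1 hb
        exact hφF x (hmY x hx)
    _ ≤ ∑ b ∈ F, n b := Finset.sum_le_sum hcount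

theorem exists_eq_msProdDen [WellQuasiOrderedLE X] (hS : IsMultisetIdeal S) :
    ∃ (A : Finset (Set X)) (Cs : List (Set X)),
      (∀ C ∈ A, IsIdeal C) ∧ (∀ C ∈ Cs, IsIdeal C) ∧ S = msProdDen A Cs := by
  obtain ⟨A, hA, hY⟩ := exists_finset_isIdeal_mem_iff ⟨starPart S, hS.isLowerSet_starPart⟩
  obtain ⟨k, C, hC, hR⟩ :=
    hS.isMultisetIdeal_residualPart.exists_eq_sum_optDen hS.bddAbove_card_residualPart
  have hstar : {s | ∀ x ∈ s, x ∈ starPart S} = starDen A :=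
    Set.ext fun s => forall₂_congr fun x _ => hY x
  refine ⟨A, List.ofFn C, hA, List.forall_mem_ofFn_iff.2 hC, ?_⟩
  calc S = {s | ∀ x ∈ s, x ∈ starPart S} + residualPart S := hS.eq_add_residualPart
    _ = starDen A + ∑ i, optDen (C i) := by rw [hstar, hR]
    _ = msProdDen A (List.ofFn C) := by
        rw [msProdDen_eq_add_sum, List.map_ofFn, List.sum_ofFn]; rfl

end IsMultisetIdeal

/-- For a well quasi-ordered set `X`, the ideals of `(X^⊛, ≤⊛)` — equivalently, the
irreducible closed subsets of `X^⊛` in the Alexandroff topology of `≤⊛` — are exactly the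
denotations of ⊛-products `A^⊛ ⊙ C₁^? ⊙ … ⊙ Cₙ^?` with `A` a finite set of ideals of `X`
and `C₁,…,Cₙ` ideals of `X`. -/
theorem stmt13 {X : Type*} [Preorder X] (hwqo : IsWqo X) (S : Set (Multiset X)) :
    (S.Nonempty ∧ (∀ u v : Multiset X, MSLE u v → v ∈ S → u ∈ S) ∧
      ∀ u ∈ S, ∀ v ∈ S, ∃ w ∈ S, MSLE u w ∧ MSLE v w) ↔
    ∃ (A : Finset (Set X)) (Cs : List (Set X)),
      (∀ C ∈ A, IsIdeal C) ∧ (∀ C ∈ Cs, IsIdeal C) ∧ S = msProdDen A Cs := by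
  constructor
  · rintro ⟨hne, hlow, hdir⟩
    have := hwqo.wellQuasiOrderedLE
    exact IsMultisetIdeal.exists_eq_msProdDen ⟨hne, hlow, hdir⟩
  · rintro ⟨A, Cs, hA, hCs, rfl⟩
    obtain ⟨hne, hlow, hdir⟩ := isMultisetIdeal_msProdDen hA hCs
    exact ⟨hne, hlow, hdir⟩
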